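/- (Conditioning-reduction inequality from Appendix B) Let X̂, Y₀, Y', Y, W, U be finite-valued random variables such that X̂ and (Y',Y,W) are conditionally independent given (Y₀,U) (the Markov chain X̂–(Y₀,U)–(Y',Y,W) holds). Then I(X̂; Y₀ | (Y',Y,W,U)) ≤ I(X̂; Y₀ | (Y',W,U)). -/

import Mathlib

open scoped Classical BigOperators

noncomputable section

namespace RelayPaper

variable {Ω : Type*} [Fintype Ω]

/-- Distribution (pushforward pmf) of the random variable `X` under the pmf `p`. -/
def dist (p : Ω → ℝ) {α : Type*} (X : Ω → α) (a : α) : ℝ :=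
  ∑ ω, if X ω = a then p ω else 0

/-- Shannon entropy (base 2) of the random variable `X` under the pmf `p`. -/
def ent (p : Ω → ℝ) {α : Type*} [Fintype α] (X : Ω → α) : ℝ :=
  -∑ a, dist p X a * Real.logb 2 (dist p X a)

/-- Conditional entropy H(X | U). -/
def condEnt (p : Ω → ℝ) {α β : Type*} [Fintype α] [Fintype β]
    (X : Ω → α) (U : Ω → β) : ℝ :=
  ent p (fun ω => (X ω, U ω)) - ent p U

/-- Conditional mutual information I(X ; Y | U). -/
def condMI (p : Ω → ℝ) {α β γ : Type*} [Fintype α] [Fintype β] [Fintype γ]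
    (X : Ω → α) (Y : Ω → β) (U : Ω → γ) : ℝ :=
  ent p (fun ω => (X ω, U ω)) + ent p (fun ω => (Y ω, U ω))
    - ent p (fun ω => (X ω, Y ω, U ω)) - ent p U

/-- `p` is a probability mass function. -/
def IsPMF (p : Ω → ℝ) : Prop := (∀ ω, 0 ≤ p ω) ∧ ∑ ω, p ω = 1

/-- `A` and `B` are conditionally independent given `C` (the Markov chain A – C – B). -/
def CondIndep (p : Ω → ℝ) {α β γ : Type*} (A : Ω → α) (B : Ω → β) (C : Ω → γ) : Prop :=
  ∀ a b c,
    dist p (fun ω => (A ω, B ω, C ω)) (a, b, c) * dist p C c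
      = dist p (fun ω => (A ω, C ω)) (a, c) * dist p (fun ω => (B ω, C ω)) (b, c)

end RelayPaper

open RelayPaper

namespace RelayPaper

theorem sum_dist_mul {Ω α : Type*} [Fintype Ω] [Fintype α] (p : Ω → ℝ) (X : Ω → α) (f : α → ℝ) :
    ∑ a, dist p X a * f a = ∑ ω, p ω * f (X ω) := by
  simp only [dist, Finset.sum_mul]
  rw [Finset.sum_comm]
  refine Finset.sum_congr rfl fun ω _ => ?_
  simp [ite_mul]

theorem ent_eq_sum {Ω α : Type*} [Fintype Ω] [Fintype α] (p : Ω → ℝ) (X : Ω → α) :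
    ent p X = -∑ ω, p ω * Real.logb 2 (dist p X (X ω)) := by
  rw [ent, sum_dist_mul p X (fun a => Real.logb 2 (dist p X a))]

theorem ent_congr {Ω α β : Type*} [Fintype Ω] [Fintype α] [Fintype β] (p : Ω → ℝ)
    (A : Ω → α) (B : Ω → β) (h : ∀ ω ω', A ω = A ω' ↔ B ω = B ω') : ent p A = ent p B := by
  simp only [ent_eq_sum, dist, h]

theorem dist_nonneg {Ω α : Type*} [Fintype Ω] (p : Ω → ℝ) (hp : ∀ ω, 0 ≤ p ω)
    (X : Ω → α) (a : α) : 0 ≤ dist p X a :=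
  Finset.sum_nonneg fun ω _ => by split_ifs <;> simp [hp]

theorem dist_pos {Ω α : Type*} [Fintype Ω] (p : Ω → ℝ) (hp : ∀ ω, 0 ≤ p ω)
    (X : Ω → α) (ω : Ω) (h : 0 < p ω) : 0 < dist p X (X ω) := by
  refine Finset.sum_pos' (fun ω _ => by split_ifs <;> simp [hp]) ⟨ω, Finset.mem_univ _, ?_⟩
  simpa using h

theorem marg {Ω α β : Type*} [Fintype Ω] [Fintype α] (p : Ω → ℝ) (A : Ω → α) (B : Ω → β) (b : β) :
    ∑ a, dist p (fun ω => (A ω, B ω)) (a, b) = dist p B b := by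
  simp only [dist]
  rw [Finset.sum_comm]
  refine Finset.sum_congr rfl fun ω _ => ?_
  by_cases h : B ω = b <;> simp [h]

theorem sum_dist {Ω α : Type*} [Fintype Ω] [Fintype α] (p : Ω → ℝ) (X : Ω → α) :
    ∑ a, dist p X a = ∑ ω, p ω := by
  simpa using sum_dist_mul p X (fun _ => 1)

theorem condMI_eq_sum {Ω α β γ : Type*} [Fintype Ω] [Fintype α] [Fintype β] [Fintype γ]
    (p : Ω → ℝ) (hp : ∀ ω, 0 ≤ p ω) (A : Ω → α) (B : Ω → β) (C : Ω → γ) :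
    condMI p A B C = -∑ ω, p ω * Real.logb 2
      ((dist p (fun ω => (A ω, C ω)) (A ω, C ω) * dist p (fun ω => (B ω, C ω)) (B ω, C ω)) /
       (dist p (fun ω => (A ω, B ω, C ω)) (A ω, B ω, C ω) * dist p C (C ω))) := by
  simp only [condMI, ent_eq_sum]
  have : ∀ a b c d : ℝ, -a + -b - -c - -d = -(a + b - (c + d)) := by intros; ring
  rw [this, ← Finset.sum_add_distrib, ← Finset.sum_add_distrib, ← Finset.sum_sub_distrib]
  congr 1
  refine Finset.sum_congr rfl fun ω _ => ?_
  rcases (hp ω).eq_or_lt with h | h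
  · simp [← h]
  have h1 := dist_pos p hp (fun ω => (A ω, C ω)) ω h
  have h2 := dist_pos p hp (fun ω => (B ω, C ω)) ω h
  have h3 := dist_pos p hp (fun ω => (A ω, B ω, C ω)) ω h
  have h4 := dist_pos p hp C ω h
  rw [Real.logb_div (mul_pos h1 h2).ne' (mul_pos h3 h4).ne', Real.logb_mul h1.ne' h2.ne',
    Real.logb_mul h3.ne' h4.ne']
  ring

theorem condMI_eq_zero {Ω α β γ : Type*} [Fintype Ω] [Fintype α] [Fintype β] [Fintype γ]
    (p : Ω → ℝ) (hp : ∀ ω, 0 ≤ p ω) (A : Ω → α) (B : Ω → β) (C : Ω → γ)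
    (h : CondIndep p A B C) : condMI p A B C = 0 := by
  rw [condMI_eq_sum p hp, neg_eq_zero]
  refine Finset.sum_eq_zero fun ω _ => ?_
  rw [h]
  by_cases h0 : dist p (fun ω => (A ω, C ω)) (A ω, C ω) *
      dist p (fun ω => (B ω, C ω)) (B ω, C ω) = 0
  · simp [h0]
  · simp [div_self h0]

theorem condMI_nonneg {Ω α β γ : Type*} [Fintype Ω] [Fintype α] [Fintype β] [Fintype γ]
    (p : Ω → ℝ) (hp : ∀ ω, 0 ≤ p ω) (A : Ω → α) (B : Ω → β) (C : Ω → γ) :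
    0 ≤ condMI p A B C := by
  rw [condMI_eq_sum p hp, neg_nonneg]
  have hl : 0 < Real.log 2 := Real.log_pos (by norm_num)
  let r : α × β × γ → ℝ := fun x =>
    (dist p (fun ω => (A ω, C ω)) (x.1, x.2.2) * dist p (fun ω => (B ω, C ω)) (x.2.1, x.2.2)) /
       (dist p (fun ω => (A ω, B ω, C ω)) x * dist p C x.2.2)
  have key : ∑ ω, p ω * r (A ω, B ω, C ω) ≤ ∑ ω, p ω := by
    rw [← sum_dist_mul p (fun ω => (A ω, B ω, C ω)) r]
    calc _ ≤ ∑ x : α × β × γ, dist p (fun ω => (A ω, C ω)) (x.1, x.2.2) *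
            dist p (fun ω => (B ω, C ω)) (x.2.1, x.2.2) / dist p C x.2.2 := by
          refine Finset.sum_le_sum fun x _ => ?_
          by_cases h : dist p (fun ω => (A ω, B ω, C ω)) x = 0
          · rw [h, zero_mul]
            exact div_nonneg (mul_nonneg (dist_nonneg p hp _ _) (dist_nonneg p hp _ _))
              (dist_nonneg p hp _ _)
          · apply le_of_eq
            simp only [r]
            rw [← mul_div_assoc, mul_div_mul_left _ _ h]
      _ = ∑ c, (∑ a, dist p (fun ω => (A ω, C ω)) (a, c)) *
            (∑ b, dist p (fun ω => (B ω, C ω)) (b, c)) / dist p C c := by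
          simp only [Finset.sum_mul_sum, Finset.sum_div]
          rw [Fintype.sum_prod_type, Finset.sum_comm]
          simp only [Fintype.sum_prod_type]
          rw [Finset.sum_comm]
          refine Finset.sum_congr rfl fun c _ => ?_
          rw [Finset.sum_comm]
      _ = ∑ c, dist p C c := by
          refine Finset.sum_congr rfl fun c _ => ?_
          rw [marg, marg, mul_self_div_self]
      _ = _ := sum_dist p C
  calc _ ≤ ∑ ω, p ω * ((r (A ω, B ω, C ω) - 1) / Real.log 2) := by
        refine Finset.sum_le_sum fun ω _ => ?_
        rcases (hp ω).eq_or_lt with h | h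
        · simp [← h]
        have h1 := dist_pos p hp (fun ω => (A ω, C ω)) ω h
        have h2 := dist_pos p hp (fun ω => (B ω, C ω)) ω h
        have h3 := dist_pos p hp (fun ω => (A ω, B ω, C ω)) ω h
        have h4 := dist_pos p hp C ω h
        refine mul_le_mul_of_nonneg_left ?_ h.le
        exact div_le_div_of_nonneg_right (Real.log_le_sub_one_of_pos
          (div_pos (mul_pos h1 h2) (mul_pos h3 h4))) hl.le
    _ = (∑ ω, p ω * r (A ω, B ω, C ω) - ∑ ω, p ω) / Real.log 2 := by
        rw [← Finset.sum_sub_distrib, Finset.sum_div]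
        refine Finset.sum_congr rfl fun ω _ => ?_
        ring
    _ ≤ 0 := div_nonpos_of_nonpos_of_nonneg (by linarith) hl.le

end RelayPaper

/-- **Conditioning-reduction inequality from Appendix B.**
If X̂ – (Y₀,U) – (Y',Y,W) is a Markov chain, then
`I(X̂; Y₀ | (Y',Y,W,U)) ≤ I(X̂; Y₀ | (Y',W,U))`. -/
theorem conditioning_reduction_inequality
    {Ω 𝒳 𝒴₀ 𝒴' 𝒴 𝒲 𝒰 : Type*} [Fintype Ω] [Fintype 𝒳] [Fintype 𝒴₀] [Fintype 𝒴']
    [Fintype 𝒴] [Fintype 𝒲] [Fintype 𝒰]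
    (p : Ω → ℝ) (hp : IsPMF p)
    (Xhat : Ω → 𝒳) (Y₀ : Ω → 𝒴₀) (Y' : Ω → 𝒴') (Y : Ω → 𝒴) (W : Ω → 𝒲) (U : Ω → 𝒰)
    (hMarkov : CondIndep p Xhat (fun ω => (Y' ω, Y ω, W ω)) (fun ω => (Y₀ ω, U ω))) :
    condMI p Xhat Y₀ (fun ω => (Y' ω, Y ω, W ω, U ω))
      ≤ condMI p Xhat Y₀ (fun ω => (Y' ω, W ω, U ω)) := by
  have h0 := condMI_eq_zero p hp.1 _ _ _ hMarkov
  have h1 := condMI_nonneg p hp.1 Xhat (fun ω => (Y' ω, W ω)) (fun ω => (Y₀ ω, U ω))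
  have h2 := condMI_nonneg p hp.1 Xhat Y (fun ω => (Y' ω, W ω, U ω))
  simp only [condMI] at *
  have e1 : ent p (fun ω => ((Y' ω, Y ω, W ω), Y₀ ω, U ω)) =
      ent p (fun ω => (Y₀ ω, Y' ω, Y ω, W ω, U ω)) :=
    ent_congr _ _ _ fun _ _ => by simp only [Prod.mk.injEq]; tauto
  have e2 : ent p (fun ω => (Xhat ω, (Y' ω, Y ω, W ω), Y₀ ω, U ω)) =
      ent p (fun ω => (Xhat ω, Y₀ ω, Y' ω, Y ω, W ω, U ω)) :=
    ent_congr _ _ _ fun _ _ => by simp only [Prod.mk.injEq]; tauto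
  have e3 : ent p (fun ω => ((Y' ω, W ω), Y₀ ω, U ω)) =
      ent p (fun ω => (Y₀ ω, Y' ω, W ω, U ω)) :=
    ent_congr _ _ _ fun _ _ => by simp only [Prod.mk.injEq]; tauto
  have e4 : ent p (fun ω => (Xhat ω, (Y' ω, W ω), Y₀ ω, U ω)) =
      ent p (fun ω => (Xhat ω, Y₀ ω, Y' ω, W ω, U ω)) :=
    ent_congr _ _ _ fun _ _ => by simp only [Prod.mk.injEq]; tauto
  have e5 : ent p (fun ω => (Y ω, Y' ω, W ω, U ω)) =
      ent p (fun ω => (Y' ω, Y ω, W ω, U ω)) :=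
    ent_congr _ _ _ fun _ _ => by simp only [Prod.mk.injEq]; tauto
  have e6 : ent p (fun ω => (Xhat ω, Y ω, Y' ω, W ω, U ω)) =
      ent p (fun ω => (Xhat ω, Y' ω, Y ω, W ω, U ω)) :=
    ent_congr _ _ _ fun _ _ => by simp only [Prod.mk.injEq]; tauto
  linarith
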